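/- Let g, h ∈ G(L₁,T) be two linear GCNs with weight matrices satisfying ‖W_ℓ^g − W_ℓ^h‖_∞ ≤ ε for all ℓ, and let H_{T,g}^{(ℓ)}(x) and H_{T,h}^{(ℓ)}(x) denote the ℓ-th layer outputs, defined recursively by H^{(0)}(x) = x and H^{(ℓ)}(x) = T H^{(ℓ−1)}(x) W_ℓ. Then for every ℓ ∈ {1,…,L₁} and every x ∈ [0,1]^{n×d}: ‖H_{T,g}^{(ℓ)}(x) − H_{T,h}^{(ℓ)}(x)‖_∞ ≤ ℓ ‖T‖_{1,∞}^ℓ d^ℓ ε. -/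

import Mathlib

/-!
One layer of the two networks, applied to features `A` and `B`, differs by
`T A W - T B V = T (A - B) W + T B (W - V)`. A product `T A W` has entries at most
`‖T‖_{1,∞} · a · d · w` when `A` and `W` have entries at most `a` and `w`
(`abs_conv_le`). With weights in `[-1, 1]`, this gives `‖H⁽ℓ⁾‖_∞ ≤ (‖T‖_{1,∞} d)^ℓ`
(`abs_gcnLayer_le`), and induction on `ℓ` using the splitting adds one more term
`(‖T‖_{1,∞} d)^(ℓ+1) ε` per layer, which yields the factor `ℓ`.
-/

open Finset

/-- Maximum absolute row sum `‖M‖_{1,∞}`. -/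
noncomputable def rowSumNorm {n m : ℕ} (M : Matrix (Fin n) (Fin m) ℝ) : ℝ :=
  ⨆ i, ∑ j, |M i j|

/-- The `ℓ`-th layer output of a linear GCN: `H⁽⁰⁾(x) = x`, `H⁽ℓ⁾(x) = T H⁽ℓ⁻¹⁾(x) W_ℓ`. -/
noncomputable def gcnLayer {n d : ℕ} (T : Matrix (Fin n) (Fin n) ℝ)
    (W : ℕ → Matrix (Fin d) (Fin d) ℝ) :
    ℕ → Matrix (Fin n) (Fin d) ℝ → Matrix (Fin n) (Fin d) ℝ
  | 0, x => x
  | (ℓ + 1), x => T * gcnLayer T W ℓ x * W (ℓ + 1)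

lemma rowSum_le_rowSumNorm {n m : ℕ} (M : Matrix (Fin n) (Fin m) ℝ) (i : Fin n) :
    ∑ j, |M i j| ≤ rowSumNorm M :=
  le_ciSup (f := fun i => ∑ j, |M i j|) (Set.finite_range _).bddAbove i

lemma rowSumNorm_nonneg {n m : ℕ} (M : Matrix (Fin n) (Fin m) ℝ) : 0 ≤ rowSumNorm M :=
  Real.iSup_nonneg fun _ => Finset.sum_nonneg fun _ _ => abs_nonneg _

/-- The entries of a graph convolution are at most the product of the entrywise bounds on the
features and on the weights, times
`‖T‖_{1,∞} d`. -/
lemma abs_conv_le {n d : ℕ} (T : Matrix (Fin n) (Fin n) ℝ) (A : Matrix (Fin n) (Fin d) ℝ)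
    (W : Matrix (Fin d) (Fin d) ℝ) {a w : ℝ} (ha : 0 ≤ a)
    (hA : ∀ i j, |A i j| ≤ a) (hW : ∀ i j, |W i j| ≤ w) (i : Fin n) (j : Fin d) :
    |(T * A * W) i j| ≤ rowSumNorm T * d * a * w := by
  have hTA : ∀ k, |(T * A) i k| ≤ rowSumNorm T * a := fun k => by
    rw [Matrix.mul_apply]
    calc |∑ l, T i l * A l k| ≤ ∑ l, |T i l * A l k| := Finset.abs_sum_le_sum_abs _ _
      _ ≤ ∑ l, |T i l| * a := Finset.sum_le_sum fun l _ => by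
          rw [abs_mul]; exact mul_le_mul_of_nonneg_left (hA l k) (abs_nonneg _)
      _ = (∑ l, |T i l|) * a := (Finset.sum_mul _ _ _).symm
      _ ≤ rowSumNorm T * a := mul_le_mul_of_nonneg_right (rowSum_le_rowSumNorm T i) ha
  rw [Matrix.mul_apply]
  calc |∑ k, (T * A) i k * W k j| ≤ ∑ k, |(T * A) i k * W k j| :=
        Finset.abs_sum_le_sum_abs _ _
    _ ≤ ∑ _k : Fin d, rowSumNorm T * a * w := Finset.sum_le_sum fun k _ => by
        rw [abs_mul]
        exact mul_le_mul (hTA k) (hW k j) (abs_nonneg _)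
          (mul_nonneg (rowSumNorm_nonneg T) ha)
    _ = rowSumNorm T * d * a * w := by
        rw [Finset.sum_const, Finset.card_univ, Fintype.card_fin, nsmul_eq_mul]; ring

lemma abs_gcnLayer_le {n d : ℕ} (T : Matrix (Fin n) (Fin n) ℝ)
    (W : ℕ → Matrix (Fin d) (Fin d) ℝ) (L : ℕ)
    (hW : ∀ ℓ, 1 ≤ ℓ → ℓ ≤ L → ∀ a b, |W ℓ a b| ≤ 1)
    (x : Matrix (Fin n) (Fin d) ℝ) (hx : ∀ a b, |x a b| ≤ 1) :
    ∀ ℓ, ℓ ≤ L → ∀ i j, |gcnLayer T W ℓ x i j| ≤ (rowSumNorm T * d) ^ ℓ := by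
  intro ℓ
  induction ℓ with
  | zero => intro _ i j; simpa [gcnLayer] using hx i j
  | succ k ih =>
    intro hk i j
    have hc : 0 ≤ rowSumNorm T * d := mul_nonneg (rowSumNorm_nonneg T) (Nat.cast_nonneg d)
    have h := abs_conv_le T (gcnLayer T W k x) (W (k + 1)) (pow_nonneg hc k)
      (ih (by omega)) (hW (k + 1) (by omega) hk) i j
    rw [gcnLayer, pow_succ]
    linarith

/-- layerwise stability of linear GCNs. If two GCNs built from `T` have
weight matrices in `[-1,1]^{d×d}` differing entrywise by at most `ε`, then for every
layer `1 ≤ ℓ ≤ L₁` and every `x ∈ [0,1]^{n×d}`,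
`‖H_{T,g}^{(ℓ)}(x) − H_{T,h}^{(ℓ)}(x)‖_∞ ≤ ℓ ‖T‖_{1,∞}^ℓ d^ℓ ε`. -/
theorem stmt_16 (n d L₁ : ℕ) (T : Matrix (Fin n) (Fin n) ℝ)
    (Wg Wh : ℕ → Matrix (Fin d) (Fin d) ℝ) (ε : ℝ)
    (hWg : ∀ ℓ, 1 ≤ ℓ → ℓ ≤ L₁ → ∀ a b, Wg ℓ a b ∈ Set.Icc (-1 : ℝ) 1)
    (hWh : ∀ ℓ, 1 ≤ ℓ → ℓ ≤ L₁ → ∀ a b, Wh ℓ a b ∈ Set.Icc (-1 : ℝ) 1)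
    (hdiff : ∀ ℓ, 1 ≤ ℓ → ℓ ≤ L₁ → ∀ a b, |Wg ℓ a b - Wh ℓ a b| ≤ ε) :
    ∀ ℓ, 1 ≤ ℓ → ℓ ≤ L₁ → ∀ x : Matrix (Fin n) (Fin d) ℝ,
      (∀ a b, x a b ∈ Set.Icc (0 : ℝ) 1) →
      ∀ i j, |gcnLayer T Wg ℓ x i j - gcnLayer T Wh ℓ x i j| ≤
        ℓ * rowSumNorm T ^ ℓ * (d : ℝ) ^ ℓ * ε := by
  intro ℓ hℓ hL x hx i j
  have hε : 0 ≤ ε := (abs_nonneg _).trans (hdiff ℓ hℓ hL j j)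
  have hc : 0 ≤ rowSumNorm T * d := mul_nonneg (rowSumNorm_nonneg T) (Nat.cast_nonneg d)
  have hx' : ∀ a b, |x a b| ≤ 1 := fun a b =>
    abs_le.2 ⟨by linarith [(hx a b).1], (hx a b).2⟩
  have hH := abs_gcnLayer_le T Wh L₁ (fun ℓ h h' a b => abs_le.2 (hWh ℓ h h' a b)) x hx'
  -- The induction starts from layer `0`, where both outputs equal `x`.
  have key : ∀ k, k ≤ L₁ → ∀ i j, |(gcnLayer T Wg k x - gcnLayer T Wh k x) i j| ≤
      k * (rowSumNorm T * d) ^ k * ε := by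
    intro k
    induction k with
    | zero => intro _ i j; simp [gcnLayer]
    | succ k ih =>
      intro hk i j
      have hsplit : gcnLayer T Wg (k + 1) x - gcnLayer T Wh (k + 1) x =
          T * (gcnLayer T Wg k x - gcnLayer T Wh k x) * Wg (k + 1) +
            T * gcnLayer T Wh k x * (Wg (k + 1) - Wh (k + 1)) := by
        simp only [gcnLayer, Matrix.mul_sub, Matrix.sub_mul]
        abel
      have h₁ := abs_conv_le T (gcnLayer T Wg k x - gcnLayer T Wh k x) (Wg (k + 1))
        (by positivity) (ih (by omega))
        (fun a b => abs_le.2 (hWg (k + 1) (by omega) hk a b)) i j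
      have h₂ := abs_conv_le T (gcnLayer T Wh k x) (Wg (k + 1) - Wh (k + 1))
        (pow_nonneg hc k) (hH k (by omega)) (hdiff (k + 1) (by omega) hk) i j
      rw [hsplit, Matrix.add_apply]
      refine (abs_add_le _ _).trans ((add_le_add h₁ h₂).trans_eq ?_)
      push_cast
      ring
  have h := key ℓ hL i j
  rwa [mul_pow, ← mul_assoc, Matrix.sub_apply] at h
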